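/- If κ is unfoldable, θ < κ, and R(κ) ⊨ 'θ is unfoldable' (that is, θ is inaccessible and for every S ⊆ R(θ) and every α < κ there is a well-founded model of rank < κ that is an end elementary extension of (R(θ),∈,S) of ordinal height ≥ α), then θ is unfoldable in V. -/

import Mathlib

open FirstOrder Cardinal

/-- The language of set theory with one binary relation symbol (membership)
and one unary predicate symbol (for a distinguished subset). -/
def LSP : FirstOrder.Language where
  Functions := fun _ => Empty
  Relations := fun n =>
    match n with
    | 1 => Unit
    | 2 => Unit
    | _ => Empty

/-- A model of the language of set theory: a carrier together with a
membership relation and the interpretation of the distinguished predicate. -/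
structure SetModel : Type 2 where
  Carrier : Type 1
  mem : Carrier → Carrier → Prop
  pred : Carrier → Prop

/-- The first-order `LSP`-structure attached to a `SetModel`. -/
def SetModel.str (M : SetModel) : LSP.Structure M.Carrier where
  funMap := fun {_} f _ => Empty.elim f
  RelMap := fun {n} =>
    match n with
    | 1 => fun _ v => M.pred (v 0)
    | 2 => fun _ v => M.mem (v 0) (v 1)
    | 0 => fun r _ => Empty.elim r
    | (_ + 3) => fun r _ => Empty.elim r

/-- Satisfaction of a first-order formula with `n` free variables in a `SetModel`. -/
def SetModel.Realize (M : SetModel) {n : ℕ} (φ : LSP.Formula (Fin n))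
    (v : Fin n → M.Carrier) : Prop :=
  letI := M.str
  φ.Realize v

/-- `f : M → N` is an elementary map. -/
def IsElem (M N : SetModel) (f : M.Carrier → N.Carrier) : Prop :=
  ∀ (n : ℕ) (φ : LSP.Formula (Fin n)) (v : Fin n → M.Carrier),
    N.Realize φ (f ∘ v) ↔ M.Realize φ v

/-- `f : M → N` realizes `N` as a (proper) end elementary extension of `M`:
it is elementary, no element of `M` gains new members in `N`, and `N` properly
extends the image of `M`. -/
structure IsEEE (M N : SetModel) (f : M.Carrier → N.Carrier) : Prop where
  elementary : IsElem M N f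
  isEnd : ∀ (a : M.Carrier) (b : N.Carrier), N.mem b (f a) → ∃ b', f b' = b
  proper : ¬ Function.Surjective f

/-- `N` is a (proper) end elementary extension of `M`. -/
def EEE (M N : SetModel) : Prop := ∃ f, IsEEE M N f

/-- Isomorphism of set models. -/
def SMIso (M N : SetModel) : Prop :=
  ∃ e : M.Carrier ≃ N.Carrier,
    (∀ x y, M.mem x y ↔ N.mem (e x) (e y)) ∧ ∀ x, M.pred x ↔ N.pred (e x)

/-- The model `(A, ∈, S)` where `A, S` are collections of ZFC sets and `∈` is
genuine membership. -/
def ZModel (A S : Set ZFSet) : SetModel :=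
  ⟨A, fun x y => (x : ZFSet) ∈ (y : ZFSet), fun x => (x : ZFSet) ∈ S⟩

/-- `(A,∈,SA) ≺ₑ (B,∈,SB)`: the inclusion map is a proper end elementary
extension of concrete (well-founded) models. -/
def ZEEE (A SA B SB : Set ZFSet) : Prop :=
  ∃ h : A ⊆ B, IsEEE (ZModel A SA) (ZModel B SB) (Set.inclusion h)

/-- `R(o) = V_o`: the collection of ZFC sets of rank `< o`. -/
def Vrank (o : Ordinal.{0}) : Set ZFSet := {x | x.rank < o}

/-- `κ` is unfoldable: `κ` is inaccessible and for every `S ⊆ R(κ)` and every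
ordinal `α`, `(R(κ),∈,S)` has a well-founded (transitive) proper end elementary
extension of ordinal height at least `α`. -/
def IsUnfoldable (κ : Cardinal.{0}) : Prop :=
  κ.IsInaccessible ∧
    ∀ S : Set ZFSet, S ⊆ Vrank κ.ord → ∀ α : Ordinal.{0},
      ∃ (N : ZFSet) (T : Set ZFSet),
        N.IsTransitive ∧ ZEEE (Vrank κ.ord) S N.toSet T ∧ α ≤ N.rank


/-- Uniformly first-order definable relations on set models. -/
def FOrel {α : Type} (Φ : ∀ M : SetModel, (α → M.Carrier) → Prop) : Prop :=
  ∃ φ : LSP.Formula α, ∀ (M : SetModel) (v : α → M.Carrier),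
    (@FirstOrder.Language.Formula.Realize LSP M.Carrier M.str α φ v) ↔ Φ M v

theorem FOrel.congr {α : Type} {Φ Ψ : ∀ M : SetModel, (α → M.Carrier) → Prop}
    (h : FOrel Φ) (e : ∀ M v, Φ M v ↔ Ψ M v) : FOrel Ψ := by
  obtain ⟨φ, hφ⟩ := h
  exact ⟨φ, fun M v => (hφ M v).trans (e M v)⟩

theorem FOrel.fls {α : Type} : FOrel (α := α) (fun _ _ => False) := by
  refine ⟨⊥, fun M v => ?_⟩
  exact Iff.rfl

theorem FOrel.imp {α : Type} {Φ Ψ : ∀ M : SetModel, (α → M.Carrier) → Prop}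
    (h : FOrel Φ) (h' : FOrel Ψ) : FOrel (fun M v => Φ M v → Ψ M v) := by
  obtain ⟨φ, hφ⟩ := h
  obtain ⟨ψ, hψ⟩ := h'
  refine ⟨φ.imp ψ, fun M v => ?_⟩
  let _ := M.str
  beta_reduce
  rw [← hφ, ← hψ]
  exact FirstOrder.Language.Formula.realize_imp

theorem FOrel.not {α : Type} {Φ : ∀ M : SetModel, (α → M.Carrier) → Prop}
    (h : FOrel Φ) : FOrel (fun M v => ¬ Φ M v) := h.imp FOrel.fls

theorem FOrel.and {α : Type} {Φ Ψ : ∀ M : SetModel, (α → M.Carrier) → Prop}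
    (h : FOrel Φ) (h' : FOrel Ψ) : FOrel (fun M v => Φ M v ∧ Ψ M v) :=
  (h.imp h'.not).not.congr (fun M v => by tauto)

theorem FOrel.or {α : Type} {Φ Ψ : ∀ M : SetModel, (α → M.Carrier) → Prop}
    (h : FOrel Φ) (h' : FOrel Ψ) : FOrel (fun M v => Φ M v ∨ Ψ M v) :=
  (h.not.imp h').congr (fun M v => by tauto)

theorem FOrel.iff {α : Type} {Φ Ψ : ∀ M : SetModel, (α → M.Carrier) → Prop}
    (h : FOrel Φ) (h' : FOrel Ψ) : FOrel (fun M v => Φ M v ↔ Ψ M v) :=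
  ((h.imp h').and (h'.imp h)).congr (fun M v => by tauto)

theorem FOrel.all {α : Type} {Φ : ∀ M : SetModel, (α → M.Carrier) → M.Carrier → Prop}
    (h : FOrel (α := Option α) (fun M w => Φ M (fun i => w (some i)) (w none))) :
    FOrel (fun M v => ∀ x, Φ M v x) := by
  obtain ⟨φ, hφ⟩ := h
  let g : Option α → α ⊕ Unit := fun o => o.elim (Sum.inr ()) Sum.inl
  refine ⟨(φ.relabel g).iAlls Unit, fun M v => ?_⟩
  let _ := M.str
  rw [FirstOrder.Language.Formula.realize_iAlls]
  constructor
  · intro h x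
    have := h (fun _ => x)
    rw [FirstOrder.Language.Formula.realize_relabel, hφ] at this
    exact this
  · intro h i
    rw [FirstOrder.Language.Formula.realize_relabel, hφ]
    exact h _

theorem FOrel.ex {α : Type} {Φ : ∀ M : SetModel, (α → M.Carrier) → M.Carrier → Prop}
    (h : FOrel (α := Option α) (fun M w => Φ M (fun i => w (some i)) (w none))) :
    FOrel (fun M v => ∃ x, Φ M v x) :=
  (FOrel.all (Φ := fun M v x => ¬ Φ M v x) h.not).not.congr (fun M v => by simp)

theorem FOrel.relabel {α β : Type} {Φ : ∀ M : SetModel, (α → M.Carrier) → Prop}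
    (h : FOrel Φ) (g : α → β) : FOrel (fun M v => Φ M (fun i => v (g i))) := by
  obtain ⟨φ, hφ⟩ := h
  refine ⟨φ.relabel g, fun M v => ?_⟩
  let _ := M.str
  rw [FirstOrder.Language.Formula.realize_relabel, hφ]
  exact Iff.rfl

theorem FOrel.eq {α : Type} (i j : α) : FOrel (fun M v => v i = v j) := by
  refine ⟨(FirstOrder.Language.Term.var i).equal (FirstOrder.Language.Term.var j),
    fun M v => ?_⟩
  let _ := M.str
  rw [FirstOrder.Language.Formula.realize_equal]
  exact Iff.rfl

theorem FOrel.mem {α : Type} (i j : α) : FOrel (fun M v => M.mem (v i) (v j)) := by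
  refine ⟨FirstOrder.Language.Relations.formula₂ (L := LSP) (show LSP.Relations 2 from ())
    (FirstOrder.Language.Term.var i) (FirstOrder.Language.Term.var j), fun M v => ?_⟩
  let _ := M.str
  rw [FirstOrder.Language.Formula.realize_rel₂]
  exact Iff.rfl

theorem FOrel.pred {α : Type} (i : α) : FOrel (fun M v => M.pred (v i)) := by
  refine ⟨FirstOrder.Language.Relations.formula₁ (L := LSP) (show LSP.Relations 1 from ())
    (FirstOrder.Language.Term.var i), fun M v => ?_⟩
  let _ := M.str
  rw [FirstOrder.Language.Formula.realize_rel₁]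
  exact Iff.rfl

theorem FOrel.elem {α : Type} [Finite α] {Φ : ∀ M : SetModel, (α → M.Carrier) → Prop}
    (h : FOrel Φ) {M N : SetModel} {f : M.Carrier → N.Carrier} (hf : IsElem M N f)
    (v : α → M.Carrier) : Φ N (fun i => f (v i)) ↔ Φ M v := by
  obtain ⟨n, ⟨e⟩⟩ := Finite.exists_equiv_fin α
  obtain ⟨φ, hφ⟩ := h.relabel e
  have := hf n φ (v ∘ e.symm)
  unfold SetModel.Realize at this
  rw [hφ, hφ] at this
  simpa using this

/-- Relativization. -/
theorem relativize {P : Type} {D B : ∀ M : SetModel, (P → M.Carrier) → M.Carrier → Prop}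
    (hD : FOrel (α := Option P) (fun M w => D M (fun i => w (some i)) (w none)))
    (hB : FOrel (α := Option P) (fun M w => B M (fun i => w (some i)) (w none)))
    {n k : ℕ} (φ : LSP.BoundedFormula (Fin n) k) :
    ∃ Φ : ∀ M : SetModel, (P → M.Carrier) → (Fin n → M.Carrier) → (Fin k → M.Carrier) → Prop,
      FOrel (α := P ⊕ (Fin n ⊕ Fin k)) (fun M w => Φ M (fun i => w (.inl i))
        (fun i => w (.inr (.inl i))) (fun i => w (.inr (.inr i)))) ∧
      ∀ (M K : SetModel) (p : P → M.Carrier) (ι : K.Carrier → M.Carrier),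
        Function.Injective ι → (∀ y, D M p y ↔ ∃ z, ι z = y) →
        (∀ a b, M.mem (ι a) (ι b) ↔ K.mem a b) → (∀ a, B M p (ι a) ↔ K.pred a) →
        ∀ v xs, Φ M p (fun i => ι (v i)) (fun i => ι (xs i)) ↔
          @FirstOrder.Language.BoundedFormula.Realize LSP K.Carrier K.str _ _ φ v xs := by
  have hterm : ∀ {k : ℕ} (t : LSP.Term (Fin n ⊕ Fin k)), ∃ i, t = .var i := by
    intro k t
    cases t with
    | var i => exact ⟨i, rfl⟩
    | func f _ => exact Empty.elim f
  have hval : ∀ {k : ℕ} (M K : SetModel) (ι : K.Carrier → M.Carrier) (v : Fin n → K.Carrier)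
      (xs : Fin k → K.Carrier) (i : Fin n ⊕ Fin k),
      Sum.elim (fun i => ι (v i)) (fun i => ι (xs i)) i = ι (Sum.elim v xs i) := by
    intro k M K ι v xs i
    cases i <;> rfl
  have hw : ∀ {k : ℕ} (M : SetModel) (w : P ⊕ (Fin n ⊕ Fin k) → M.Carrier)
      (i : Fin n ⊕ Fin k), w (.inr i) =
      Sum.elim (fun i => w (.inr (.inl i))) (fun i => w (.inr (.inr i))) i := by
    intro k M w i
    cases i <;> rfl
  induction φ with
  | falsum =>
    exact ⟨fun _ _ _ _ => False, FOrel.fls, fun M K p ι _ _ _ _ v xs => Iff.rfl⟩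
  | equal t₁ t₂ =>
    obtain ⟨i, rfl⟩ := hterm t₁
    obtain ⟨j, rfl⟩ := hterm t₂
    refine ⟨fun M p v xs => Sum.elim v xs i = Sum.elim v xs j, ?_, ?_⟩
    · exact (FOrel.eq (.inr i) (.inr j)).congr (fun M w => by
        rw [hw M w i, hw M w j])
    · intro M K p ι hι _ _ _ v xs
      beta_reduce
      rw [hval, hval, hι.eq_iff]
      exact Iff.rfl
  | @rel k l R ts =>
    match l, R with
    | 1, R =>
      obtain ⟨i, hi⟩ := hterm (ts 0)
      refine ⟨fun M p v xs => B M p (Sum.elim v xs i), ?_, ?_⟩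
      · refine (hB.relabel (fun o : Option P => o.elim (.inr i) .inl)).congr (fun M w => ?_)
        beta_reduce
        rw [← hw]
        exact Iff.rfl
      · intro M K p ι hι _ _ hb v xs
        beta_reduce
        rw [hval, hb]
        let _ := K.str
        show _ ↔ K.pred (FirstOrder.Language.Term.realize _ (ts 0))
        rw [hi]
        exact Iff.rfl
    | 2, R =>
      obtain ⟨i, hi⟩ := hterm (ts 0)
      obtain ⟨j, hj⟩ := hterm (ts 1)
      refine ⟨fun M p v xs => M.mem (Sum.elim v xs i) (Sum.elim v xs j), ?_, ?_⟩
      · exact (FOrel.mem (.inr i) (.inr j)).congr (fun M w => by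
        rw [hw M w i, hw M w j])
      · intro M K p ι hι _ hm _ v xs
        beta_reduce
        rw [hval, hval, hm]
        let _ := K.str
        show _ ↔ K.mem (FirstOrder.Language.Term.realize _ (ts 0)) (FirstOrder.Language.Term.realize _ (ts 1))
        rw [hi, hj]
        exact Iff.rfl
    | 0, R => exact Empty.elim R
    | (_ + 3), R => exact Empty.elim R
  | imp f₁ f₂ ih₁ ih₂ =>
    obtain ⟨Φ₁, h₁, e₁⟩ := ih₁
    obtain ⟨Φ₂, h₂, e₂⟩ := ih₂
    refine ⟨fun M p v xs => Φ₁ M p v xs → Φ₂ M p v xs, h₁.imp h₂, ?_⟩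
    intro M K p ι a b c d v xs
    let _ := K.str
    beta_reduce
    rw [e₁ M K p ι a b c d, e₂ M K p ι a b c d, FirstOrder.Language.BoundedFormula.realize_imp]
  | @all k f ih =>
    obtain ⟨Φ, h, e⟩ := ih
    refine ⟨fun M p v xs => ∀ x, D M p x → Φ M p v (Fin.snoc (α := fun _ => M.Carrier) xs x),
      ?_, ?_⟩
    · refine FOrel.all (FOrel.imp ?_ ?_)
      · exact (hD.relabel (fun o : Option P => o.elim none (fun i => some (.inl i)))).congr
          (fun M w => Iff.rfl)
      · let g : P ⊕ (Fin n ⊕ Fin (k+1)) → Option (P ⊕ (Fin n ⊕ Fin k)) :=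
          Sum.elim (fun i => some (.inl i)) (Sum.elim (fun i => some (.inr (.inl i)))
            (Fin.snoc (α := fun _ => Option (P ⊕ (Fin n ⊕ Fin k)))
              (fun i => some (.inr (.inr i))) none))
        refine (h.relabel g).congr (fun M w => ?_)
        have : (fun i => w (g (.inr (.inr i)))) = Fin.snoc (α := fun _ => M.Carrier)
            (fun i => w (some (.inr (.inr i)))) (w none) := by
          funext i
          refine Fin.lastCases ?_ (fun i => ?_) i <;> simp [g]
        rw [this]
        exact Iff.rfl
    · intro M K p ι a b c d v xs
      let _ := K.str
      rw [FirstOrder.Language.BoundedFormula.realize_all]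
      have key : ∀ z, Φ M p (fun i => ι (v i))
          (Fin.snoc (α := fun _ => M.Carrier) (fun i => ι (xs i)) (ι z)) ↔
          f.Realize v (Fin.snoc (α := fun _ => K.Carrier) xs z) := by
        intro z
        rw [← e M K p ι a b c d]
        have : (Fin.snoc (α := fun _ => M.Carrier) (fun i => ι (xs i)) (ι z)) =
          fun i => ι (Fin.snoc (α := fun _ => K.Carrier) xs z i) := by
          funext i
          refine Fin.lastCases ?_ (fun i => ?_) i <;> simp
        rw [this]
      constructor
      · intro h z
        exact (key z).1 (h _ ((b _).2 ⟨z, rfl⟩))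
      · intro h x hx
        obtain ⟨z, rfl⟩ := (b _).1 hx
        exact (key z).2 (h z)

/-- Internal Kuratowski pairing and a ternary relation coded by the predicate. -/
def upM (M : SetModel) (z x y : M.Carrier) : Prop := ∀ w, M.mem w z ↔ (w = x ∨ w = y)

def prM (M : SetModel) (p x y : M.Carrier) : Prop :=
  ∀ z, M.mem z p ↔ (upM M z x x ∨ upM M z x y)

def QM (M : SetModel) (t x y : M.Carrier) : Prop :=
  ∃ p q, prM M p t x ∧ prM M q p y ∧ M.pred q

theorem FOrel.up {α : Type} (i j k : α) : FOrel (fun M v => upM M (v i) (v j) (v k)) :=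
  FOrel.all ((FOrel.mem _ _).iff ((FOrel.eq _ _).or (FOrel.eq _ _)))

theorem FOrel.pr {α : Type} (i j k : α) : FOrel (fun M v => prM M (v i) (v j) (v k)) :=
  FOrel.all ((FOrel.mem _ _).iff ((FOrel.up _ _ _).or (FOrel.up _ _ _)))

theorem FOrel.Q {α : Type} (i j k : α) : FOrel (fun M v => QM M (v i) (v j) (v k)) :=
  FOrel.ex (FOrel.ex ((FOrel.pr _ _ _).and ((FOrel.pr _ _ _).and (FOrel.pred _))))


theorem Vrank_trans {o : Ordinal.{0}} {x y : ZFSet} (hx : x ∈ Vrank o) (h : y ∈ x) :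
    y ∈ Vrank o := (ZFSet.rank_lt_of_mem h).trans hx

theorem Vrank_pair {o : Ordinal.{0}} (ho : Order.IsSuccLimit o) {x y : ZFSet}
    (hx : x ∈ Vrank o) (hy : y ∈ Vrank o) : ({x, y} : ZFSet) ∈ Vrank o := by
  show ZFSet.rank _ < o
  rw [ZFSet.rank_pair]
  exact max_lt (ho.succ_lt hx) (ho.succ_lt hy)

theorem Vrank_opair {o : Ordinal.{0}} (ho : Order.IsSuccLimit o) {x y : ZFSet}
    (hx : x ∈ Vrank o) (hy : y ∈ Vrank o) : ZFSet.pair x y ∈ Vrank o := by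
  have := Vrank_pair ho (Vrank_pair ho hx hx) (Vrank_pair ho hx hy)
  rwa [ZFSet.pair_eq_singleton] at this

theorem upM_V {o : Ordinal.{0}} {S : Set ZFSet} (z x y : Vrank o) :
    upM (ZModel (Vrank o) S) z x y ↔ (z : ZFSet) = {(x : ZFSet), (y : ZFSet)} := by
  constructor
  · intro h
    ext w
    rw [ZFSet.mem_pair]
    constructor
    · intro hw
      have := (h ⟨w, Vrank_trans z.2 hw⟩).1 hw
      rcases this with h | h
      · exact Or.inl (congrArg Subtype.val h)
      · exact Or.inr (congrArg Subtype.val h)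
    · rintro (rfl | rfl)
      · exact (h x).2 (Or.inl rfl)
      · exact (h y).2 (Or.inr rfl)
  · intro h w
    show (w : Vrank o).1 ∈ z.1 ↔ _
    rw [h, ZFSet.mem_pair]
    exact or_congr Subtype.ext_iff.symm Subtype.ext_iff.symm

theorem prM_V {o : Ordinal.{0}} (ho : Order.IsSuccLimit o) {S : Set ZFSet} (p x y : Vrank o) :
    prM (ZModel (Vrank o) S) p x y ↔ (p : ZFSet) = ZFSet.pair x y := by
  unfold ZFSet.pair
  rw [← ZFSet.pair_eq_singleton]
  constructor
  · intro h
    ext w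
    rw [ZFSet.mem_pair]
    constructor
    · intro hw
      have := (h ⟨w, Vrank_trans p.2 hw⟩).1 hw
      rwa [upM_V, upM_V] at this
    · rintro (rfl | rfl)
      · exact (h ⟨_, Vrank_pair ho x.2 x.2⟩).2 (Or.inl ((upM_V _ _ _).2 rfl))
      · exact (h ⟨_, Vrank_pair ho x.2 y.2⟩).2 (Or.inr ((upM_V _ _ _).2 rfl))
  · intro h w
    refine Iff.trans ?_ (or_congr (upM_V w x x) (upM_V w x y)).symm
    show (w : Vrank o).1 ∈ p.1 ↔ _
    rw [h, ZFSet.mem_pair]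

theorem QM_V {o : Ordinal.{0}} (ho : Order.IsSuccLimit o) {S : Set ZFSet} (t x y : Vrank o) :
    QM (ZModel (Vrank o) S) t x y ↔
      ZFSet.pair (ZFSet.pair (t : ZFSet) (x : ZFSet)) (y : ZFSet) ∈ S := by
  constructor
  · rintro ⟨p, q, hp, hq, hS⟩
    have hp' := (prM_V ho p t x).1 hp
    have hq' := (prM_V ho q p y).1 hq
    rw [← hp', ← hq']
    exact hS
  · intro h
    refine ⟨⟨_, Vrank_opair ho t.2 x.2⟩, ⟨_, Vrank_opair ho (Vrank_opair ho t.2 x.2) y.2⟩,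
      ?_, ?_, h⟩
    · exact (prM_V ho ⟨_, _⟩ t x).2 rfl
    · exact (prM_V ho ⟨_, _⟩ ⟨_, _⟩ y).2 rfl

/-- Truth of a formula in all the coded models is first-order. -/
theorem relativize_all {n : ℕ} (φ : LSP.Formula (Fin n)) :
    ∃ Φ : ∀ M : SetModel, (Fin 3 → M.Carrier) → (Fin n → M.Carrier) → Prop,
      FOrel (α := Fin 2 ⊕ Fin n) (fun M w => ∀ x, Φ M ![w (.inl 0), w (.inl 1), x]
        (fun i => w (.inr i))) ∧
      ∀ (M K : SetModel) (t₀ t₁ x : M.Carrier) (ι : K.Carrier → M.Carrier),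
        Function.Injective ι → (∀ y, QM M t₀ x y ↔ ∃ z, ι z = y) →
        (∀ a b, M.mem (ι a) (ι b) ↔ K.mem a b) → (∀ a, QM M t₁ x (ι a) ↔ K.pred a) →
        ∀ v, Φ M ![t₀, t₁, x] (fun i => ι (v i)) ↔ K.Realize φ v := by
  obtain ⟨Φ, h, e⟩ := relativize (P := Fin 3) (D := fun M p y => QM M (p 0) (p 2) y)
    (B := fun M p y => QM M (p 1) (p 2) y) (FOrel.Q _ _ _) (FOrel.Q _ _ _) φ
  refine ⟨fun M p v => Φ M p v (fun i => Fin.elim0 i), ?_, ?_⟩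
  · refine FOrel.all ?_
    let g : Fin 3 ⊕ (Fin n ⊕ Fin 0) → Option (Fin 2 ⊕ Fin n) :=
      Sum.elim ![some (.inl 0), some (.inl 1), none]
        (Sum.elim (fun i => some (.inr i)) (fun i => Fin.elim0 i))
    refine (h.relabel g).congr (fun M w => ?_)
    have h1 : (fun i => w (g (.inl i))) =
        ![w (some (.inl 0)), w (some (.inl 1)), w none] := by
      funext i
      fin_cases i <;> rfl
    have h2 : (fun i => w (g (.inr (.inr i)))) = (fun i => Fin.elim0 i) := by
      funext i
      exact Fin.elim0 i
    rw [h1, h2]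
    exact Iff.rfl
  · intro M K t₀ t₁ x ι a b c d v
    have := e M K ![t₀, t₁, x] ι a b c d v default
    have h2 : (fun i => ι ((default : Fin 0 → K.Carrier) i)) = (fun i => Fin.elim0 i) := by
      funext i
      exact Fin.elim0 i
    rw [h2] at this
    exact this

/-- If `κ` is unfoldable, `θ < κ`, and `θ` is unfoldable in
the sense of `R(κ)`, then `θ` is unfoldable in `V`. -/
theorem unfoldable_in_Rkappa_implies_unfoldable
    (κ θ : Cardinal.{0}) (hκ : IsUnfoldable κ) (hlt : θ < κ)
    (hθinacc : θ.IsInaccessible)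
    (hrel : ∀ S : Set ZFSet, S ⊆ Vrank θ.ord → ∀ α : Ordinal.{0}, α < κ.ord →
      ∃ (N : ZFSet) (T : Set ZFSet), N.IsTransitive ∧ N.rank < κ.ord ∧
        ZEEE (Vrank θ.ord) S N.toSet T ∧ α ≤ N.rank) :
    IsUnfoldable θ := by
  refine ⟨hθinacc, fun S hS α => ?_⟩
  have ho : Order.IsSuccLimit κ.ord := Cardinal.isSuccLimit_ord hκ.1.aleph0_lt.le
  have hθκ : θ.ord < κ.ord := Cardinal.ord_lt_ord.2 hlt
  have hsub : Vrank θ.ord ⊆ Vrank κ.ord := fun x hx => lt_trans (show x.rank < θ.ord from hx) hθκ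
  have hch := fun (x : ZFSet) (hx : x.rank < κ.ord) => hrel S hS x.rank hx
  choose! NN TT hN1 hN2 hN3 hN4 using hch
  -- the predicate
  let R : ZFSet → ZFSet → ZFSet → Prop := fun t x y =>
    (t = ∅ ∧ y ∈ NN x) ∨ (t = {∅} ∧ y ∈ TT x) ∨ (t = {{∅}} ∧ x.rank ≤ y.rank)
  let Pk : Set ZFSet := {q | q ∈ Vrank κ.ord ∧ ∃ t x y, q = ZFSet.pair (ZFSet.pair t x) y ∧ R t x y}
  have hPk : Pk ⊆ Vrank κ.ord := fun q hq => hq.1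
  obtain ⟨N', T', hN'tr, ⟨hsub', hE⟩, hN'r⟩ := hκ.2 Pk hPk (Order.succ (max α (Order.succ θ.ord)))
  have hf := hE.elementary
  -- tags
  have ht0 : (∅ : ZFSet) ∈ Vrank κ.ord := by
    show ZFSet.rank _ < _
    rw [ZFSet.rank_empty]
    exact ho.bot_lt
  have hsing : ∀ x : ZFSet, x ∈ Vrank κ.ord → ({x} : ZFSet) ∈ Vrank κ.ord := by
    intro x hx
    have := Vrank_pair ho hx hx
    rwa [ZFSet.pair_eq_singleton] at this
  have ht1 := hsing _ ht0
  have ht2 := hsing _ ht1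
  have hne1 : (∅ : ZFSet) ≠ {∅} := by
    intro h
    have : (∅ : ZFSet) ∈ ({∅} : ZFSet) := ZFSet.mem_singleton.2 rfl
    rw [← h] at this
    exact ZFSet.notMem_empty _ this
  have hne2 : (∅ : ZFSet) ≠ {{∅}} := by
    intro h
    have : ({∅} : ZFSet) ∈ ({{∅}} : ZFSet) := ZFSet.mem_singleton.2 rfl
    rw [← h] at this
    exact ZFSet.notMem_empty _ this
  have hne3 : ({∅} : ZFSet) ≠ {{∅}} := by
    intro h
    exact hne1 (ZFSet.singleton_injective h)
  let M : SetModel := ZModel (Vrank κ.ord) Pk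
  let M' : SetModel := ZModel N'.toSet T'
  let t0 : M.Carrier := ⟨∅, ht0⟩
  let t1 : M.Carrier := ⟨{∅}, ht1⟩
  let t2 : M.Carrier := ⟨{{∅}}, ht2⟩
  let f : M.Carrier → M'.Carrier := Set.inclusion hsub'
  have hf : IsElem M M' f := hf
  have hQ : ∀ t x y : Vrank κ.ord, QM M t x y ↔ R t x y := by
    intro t x y
    refine (QM_V ho t x y).trans ?_
    constructor
    · rintro ⟨-, t', x', y', h, hR⟩
      obtain ⟨h1, rfl⟩ := ZFSet.pair_inj.1 h
      obtain ⟨rfl, rfl⟩ := ZFSet.pair_inj.1 h1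
      exact hR
    · intro h
      exact ⟨Vrank_opair ho (Vrank_opair ho t.2 x.2) y.2, _, _, _, rfl, h⟩
  have hA : ∀ x y : Vrank κ.ord, QM M t0 x y ↔ (y : ZFSet) ∈ NN x := by
    intro x y
    refine (hQ ⟨∅, ht0⟩ x y).trans ?_
    exact ⟨fun h => h.elim (·.2) (fun h => h.elim (fun h => absurd h.1 hne1)
      (fun h => absurd h.1 hne2)), fun h => Or.inl ⟨rfl, h⟩⟩
  have hB : ∀ x y : Vrank κ.ord, QM M t1 x y ↔ (y : ZFSet) ∈ TT x := by
    intro x y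
    refine (hQ ⟨{∅}, ht1⟩ x y).trans ?_
    exact ⟨fun h => h.elim (fun h => absurd h.1 hne1.symm) (fun h => h.elim (·.2)
      (fun h => absurd h.1 hne3)), fun h => Or.inr (Or.inl ⟨rfl, h⟩)⟩
  have hC : ∀ x y : Vrank κ.ord, QM M t2 x y ↔ (x : ZFSet).rank ≤ (y : ZFSet).rank := by
    intro x y
    refine (hQ ⟨{{∅}}, ht2⟩ x y).trans ?_
    simp only [R, hne2.symm, hne3.symm, true_and, false_and, false_or]
  have hNV : ∀ x : Vrank κ.ord, ∀ y ∈ NN x, y ∈ Vrank κ.ord := fun x y hy =>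
    Vrank_trans (hN2 x x.2) hy
  -- transfer
  have F1 : ∀ x y z : M'.Carrier, QM M' (f t0) x y → M'.mem z y → QM M' (f t0) x z := by
    refine ((FOrel.elem (α := Fin 1) (Φ := fun M w => ∀ x y z : M.Carrier,
      QM M (w 0) x y → M.mem z y → QM M (w 0) x z)
      (FOrel.all (FOrel.all (FOrel.all ((FOrel.Q _ _ _).imp
        ((FOrel.mem _ _).imp (FOrel.Q _ _ _)))))) hf (fun _ => t0)).2 ?_)
    intro x y z h1 h2
    exact (hA x z).2 ((hN1 _ x.2).mem_trans h2 ((hA x y).1 h1))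
  have F2 : ∀ a : M.Carrier, (a : Vrank κ.ord).1 ∈ Vrank θ.ord →
      ∀ x : M'.Carrier, QM M' (f t0) x (f a) := by
    intro a ha
    refine ((FOrel.elem (α := Fin 2) (Φ := fun M w => ∀ x : M.Carrier,
      QM M (w 0) x (w 1)) (FOrel.all (FOrel.Q _ _ _)) hf ![t0, a]).2 ?_)
    intro x
    obtain ⟨hs, -⟩ := hN3 _ x.2
    exact (hA x a).2 (hs ha)
  have F3 : ∀ x x' : M'.Carrier, M'.mem x' x →
      ∃ y, QM M' (f t0) x y ∧ QM M' (f t2) x' y := by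
    refine ((FOrel.elem (α := Fin 2) (Φ := fun M w => ∀ x x' : M.Carrier, M.mem x' x →
      ∃ y, QM M (w 0) x y ∧ QM M (w 1) x' y)
      (FOrel.all (FOrel.all ((FOrel.mem _ _).imp (FOrel.ex
        ((FOrel.Q _ _ _).and (FOrel.Q _ _ _)))))) hf ![t0, t2]).2 ?_)
    intro x x' hx
    have h1 : (x' : Vrank κ.ord).1.rank < (NN (x : Vrank κ.ord).1).rank :=
      (ZFSet.rank_lt_of_mem hx).trans_le (hN4 _ x.2)
    obtain ⟨y, hy, hy'⟩ := ZFSet.lt_rank_iff.1 h1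
    exact ⟨⟨y, hNV x y hy⟩, (hA x ⟨y, _⟩).2 hy, (hC x' ⟨y, _⟩).2 hy'⟩
  have F4 : ∀ x y : M'.Carrier, QM M' (f t2) x y → ∀ x', M'.mem x' x →
      ∃ y', M'.mem y' y ∧ QM M' (f t2) x' y' := by
    refine ((FOrel.elem (α := Fin 1) (Φ := fun M w => ∀ x y : M.Carrier, QM M (w 0) x y →
      ∀ x', M.mem x' x → ∃ y', M.mem y' y ∧ QM M (w 0) x' y')
      (FOrel.all (FOrel.all ((FOrel.Q _ _ _).imp (FOrel.all ((FOrel.mem _ _).imp (FOrel.ex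
        ((FOrel.mem _ _).and (FOrel.Q _ _ _)))))))) hf (fun _ => t2)).2 ?_)
    intro x y hxy x' hx
    have h1 : (x' : Vrank κ.ord).1.rank < (y : Vrank κ.ord).1.rank :=
      (ZFSet.rank_lt_of_mem hx).trans_le ((hC x y).1 hxy)
    obtain ⟨z, hz, hz'⟩ := ZFSet.lt_rank_iff.1 h1
    exact ⟨⟨z, Vrank_trans y.2 hz⟩, hz, (hC x' ⟨z, _⟩).2 hz'⟩
  -- real rank comparison
  have hrank : ∀ (x y : ZFSet) (hx : x ∈ N'.toSet) (hy : y ∈ N'.toSet),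
      QM M' (f t2) ⟨x, hx⟩ ⟨y, hy⟩ → x.rank ≤ y.rank := by
    intro x
    induction x using ZFSet.inductionOn with
    | _ x ih =>
      intro y hx hy h
      rw [ZFSet.rank_le_iff]
      intro x' hx'
      have hx'N : x' ∈ N'.toSet := hN'tr.mem_trans hx' hx
      obtain ⟨⟨y', hy'N⟩, hy', hq⟩ := F4 _ _ h ⟨x', hx'N⟩ hx'
      exact (ih x' hx' y' hx'N hy'N hq).trans_lt (ZFSet.rank_lt_of_mem hy')
  -- pick the index
  have hlt' := (Order.lt_succ _).trans_le hN'r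
  obtain ⟨x, hxN, hxr⟩ := ZFSet.lt_rank_iff.1 hlt'
  let X : M'.Carrier := ⟨x, hxN⟩
  let N : ZFSet := ZFSet.sep (fun y => ∃ h : y ∈ N'.toSet, QM M' (f t0) X ⟨y, h⟩) N'
  let T : Set ZFSet := {y | ∃ h : y ∈ N'.toSet, QM M' (f t1) X ⟨y, h⟩}
  have hNmem : ∀ y, y ∈ N ↔ ∃ h : y ∈ N'.toSet, QM M' (f t0) X ⟨y, h⟩ := by
    intro y
    rw [ZFSet.mem_sep]
    exact ⟨fun h => h.2, fun h => ⟨h.1, h⟩⟩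
  have hNr : x.rank ≤ N.rank := by
    rw [ZFSet.rank_le_iff]
    intro x' hx'
    have hx'N : x' ∈ N'.toSet := hN'tr.mem_trans hx' hxN
    obtain ⟨⟨y, hyN⟩, hy, hq⟩ := F3 X ⟨x', hx'N⟩ hx'
    exact (hrank _ _ _ _ hq).trans_lt (ZFSet.rank_lt_of_mem ((hNmem y).2 ⟨hyN, hy⟩))
  have hVN : Vrank θ.ord ⊆ N.toSet := by
    intro a ha
    exact (hNmem a).2 ⟨hsub' (hsub ha), F2 ⟨a, hsub ha⟩ ha X⟩
  have hpos : ∀ (n : ℕ) (φ : LSP.Formula (Fin n)) (v : Fin n → Vrank θ.ord),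
      (ZModel (Vrank θ.ord) S).Realize φ v →
      (ZModel N.toSet T).Realize φ (Set.inclusion hVN ∘ v) := by
    intro n φ v hv
    obtain ⟨Φ, hΦ, e⟩ := relativize_all φ
    let w : Fin 2 ⊕ Fin n → M.Carrier := Sum.elim ![t0, t1] (fun i => ⟨v i, hsub (v i).2⟩)
    have hw := (hΦ.elem hf w).2 ?_
    · have hι : ∀ y, y ∈ N.toSet → y ∈ N'.toSet := fun y hy => ((hNmem y).1 hy).1
      refine (e M' (ZModel N.toSet T) (f t0) (f t1) X (Set.inclusion hι)
        (Set.inclusion_injective hι) ?_ ?_ ?_ (Set.inclusion hVN ∘ v)).1 (hw X)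
      · rintro ⟨y, hy⟩
        constructor
        · intro h
          exact ⟨⟨y, (hNmem y).2 ⟨hy, h⟩⟩, rfl⟩
        · rintro ⟨⟨z, hz⟩, h⟩
          have : z = y := congrArg Subtype.val h
          subst this
          exact ((hNmem z).1 hz).2
      · intro a b
        exact Iff.rfl
      · rintro ⟨a, ha⟩
        exact ⟨fun h => ⟨hι a ha, h⟩, fun h => h.2⟩
    · intro x
      obtain ⟨hs, hEx⟩ := hN3 _ x.2
      have hι : ∀ y, y ∈ (NN x.1).toSet → y ∈ Vrank κ.ord := hNV x
      refine (e M (ZModel (NN x.1).toSet (TT x.1)) t0 t1 x (Set.inclusion hι)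
        (Set.inclusion_injective hι) ?_ ?_ ?_ (Set.inclusion hs ∘ v)).2
        ((hEx.elementary n φ v).2 hv)
      · rintro ⟨y, hy⟩
        refine (hA x ⟨y, hy⟩).trans ?_
        constructor
        · intro h
          exact ⟨⟨y, h⟩, rfl⟩
        · rintro ⟨⟨z, hz⟩, h⟩
          have : z = y := congrArg Subtype.val h
          subst this
          exact hz
      · intro a b
        exact Iff.rfl
      · rintro ⟨a, ha⟩
        exact hB x ⟨a, hι a ha⟩
  refine ⟨N, T, ?_, ⟨hVN, ?_, ?_, ?_⟩, ((le_max_left _ _).trans hxr).trans hNr⟩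
  · intro y hy z hz
    obtain ⟨h, hq⟩ := (hNmem y).1 hy
    have hzN : z ∈ N'.toSet := hN'tr.mem_trans hz h
    exact (hNmem z).2 ⟨hzN, F1 X ⟨y, h⟩ ⟨z, hzN⟩ hq hz⟩
  · intro n φ v
    refine ⟨fun h => ?_, hpos n φ v⟩
    by_contra hv
    have := hpos n φ.not v (by
      let _ := (ZModel (Vrank θ.ord) S).str
      exact FirstOrder.Language.Formula.realize_not.2 hv)
    let _ := (ZModel N.toSet T).str
    exact FirstOrder.Language.Formula.realize_not.1 this h
  · intro a b hb
    exact ⟨⟨b.1, Vrank_trans a.2 hb⟩, rfl⟩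
  · intro hsurj
    have h1 : N.rank ≤ θ.ord := by
      rw [ZFSet.rank_le_iff]
      intro y hy
      obtain ⟨a, ha⟩ := hsurj ⟨y, hy⟩
      have : a.1 = y := congrArg Subtype.val ha
      rw [← this]
      exact a.2
    exact absurd (((le_max_right _ _).trans hxr).trans hNr)
      (not_le.2 (Order.lt_succ_of_le h1))
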